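/- In U = U_q⁺(C₂), write B(a,b,c,d) = b₁^a b₂^b b₃^c b₄^d for a,b,c,d ∈ ℕ, with the convention that any term B(a',b',c',d') having a negative index is read as 0 (its scalar coefficient then vanishes). Then: B(a,b,c,d)·e₁ = B(a,b,c,d+1); B(a,b,c,d)·e₂ = [d]₁ q^{d−2c−1} B(a,b+1,c,d−1) + q^{2(d−b)} B(a+1,b,c,d) − ⟨1⟩ q^{2d−2c+1}[c]₂[2]₁⁻¹ B(a,b+2,c−1,d) + [d−1]₁[d]₁ B(a,b,c+1,d−2); e₁·B(a,b,c,d) = [2]₁[b]₁ q^{2a−b+1} B(a,b−1,c+1,d) + q^{2a−2c} B(a,b,c,d+1) + [a]₂ B(a−1,b+1,c,d); and e₂·B(a,b,c,d) = B(a+1,b,c,d). -/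

import Mathlib

noncomputable section

/-- The base field `K = ℚ(q)`, rational functions over `ℚ`. -/
abbrev K : Type := RatFunc ℚ

/-- The indeterminate `q`. -/
def q : K := RatFunc.X

/-- `⟨m⟩ = q^m − q^{−m}`. -/
def qbra (m : ℕ) : K := q ^ m - q⁻¹ ^ m

/-- `[m]₁ = ⟨m⟩/⟨1⟩`. -/
def qn1 (m : ℕ) : K := qbra m / qbra 1

/-- `[m]₂ = ⟨2m⟩/⟨2⟩`. -/
def qn2 (m : ℕ) : K := qbra (2 * m) / qbra 2

/-- Generators of the free algebra on two letters. -/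
def g (i : Fin 2) : FreeAlgebra K (Fin 2) := FreeAlgebra.ι K i

/-- The `q`-Serre relations of type `C₂`. -/
inductive SerreC2 : FreeAlgebra K (Fin 2) → FreeAlgebra K (Fin 2) → Prop
  | rel1 : SerreC2
      (g 0 ^ 3 * g 1 - qn1 3 • (g 0 ^ 2 * g 1 * g 0) + qn1 3 • (g 0 * g 1 * g 0 ^ 2)
        - g 1 * g 0 ^ 3) 0
  | rel2 : SerreC2
      (g 1 ^ 2 * g 0 - qn2 2 • (g 1 * g 0 * g 1) + g 0 * g 1 ^ 2) 0

/-- `U_q⁺(C₂)`: the free algebra on `e₁, e₂` modulo the `q`-Serre relations. -/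
abbrev UC2 : Type := RingQuot SerreC2

/-- The Chevalley generator `e₁`. -/
def e1 : UC2 := RingQuot.mkAlgHom K SerreC2 (g 0)

/-- The Chevalley generator `e₂`. -/
def e2 : UC2 := RingQuot.mkAlgHom K SerreC2 (g 1)

/-- The root vector `b₁ = e₂`. -/
def b1 : UC2 := e2

/-- The root vector `b₂ = e₁e₂ − q² e₂e₁`. -/
def b2 : UC2 := e1 * e2 - (q ^ 2) • (e2 * e1)

/-- The root vector `b₃ = [2]₁⁻¹ (e₁b₂ − b₂e₁)`. -/
def b3 : UC2 := (qn1 2)⁻¹ • (e1 * b2 - b2 * e1)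

/-- The root vector `b₄ = e₁`. -/
def b4 : UC2 := e1

/-- The PBW monomial `B(a,b,c,d) = b₁^a b₂^b b₃^c b₄^d`. -/
def Bmon (a b c d : ℕ) : UC2 := b1 ^ a * b2 ^ b * b3 ^ c * b4 ^ d

instance natAlgK : Algebra ℕ K := Semiring.toNatAlgebra

instance intAlgK : Algebra ℤ K := Ring.toIntAlgebra K

lemma q_ne : q ≠ 0 := RatFunc.X_ne_zero

lemma q_pow_ne (n : ℕ) (hn : n ≠ 0) : q ^ n ≠ 1 := by
  intro h
  unfold q at h
  rw [← RatFunc.algebraMap_X, ← map_pow, ← map_one (algebraMap (Polynomial ℚ) (RatFunc ℚ))] at h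
  have h2 := RatFunc.algebraMap_injective ℚ h
  have h3 := congrArg Polynomial.natDegree h2
  simp at h3
  exact hn h3

lemma q2_ne : q ^ 2 - 1 ≠ 0 := sub_ne_zero.2 (q_pow_ne 2 (by norm_num))

lemma q4_ne : q ^ 4 - 1 ≠ 0 := sub_ne_zero.2 (q_pow_ne 4 (by norm_num))

lemma q2p_ne : q ^ 2 + 1 ≠ 0 := by
  intro h
  apply q4_ne
  linear_combination (q ^ 2 - 1) * h

lemma qn1_eq (m : ℕ) : qn1 m = q * (q ^ m - (q ^ m)⁻¹) / (q ^ 2 - 1) := by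
  have := q_ne
  have := q2_ne
  have h : q - q⁻¹ = (q ^ 2 - 1) / q := by field_simp
  unfold qn1 qbra
  rw [pow_one, pow_one, h, inv_pow]
  field_simp

lemma qn2_eq (m : ℕ) : qn2 m = q ^ 2 * ((q ^ m) ^ 2 - ((q ^ m) ^ 2)⁻¹) / (q ^ 4 - 1) := by
  have := q_ne
  have := q4_ne
  have h : q ^ 2 - q⁻¹ ^ 2 = (q ^ 4 - 1) / q ^ 2 := by field_simp
  unfold qn2 qbra
  rw [h, inv_pow, pow_mul', ]
  field_simp

lemma qn1_zero : qn1 0 = 0 := by simp [qn1, qbra]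
lemma qn2_zero : qn2 0 = 0 := by simp [qn2, qbra]
lemma qn1_one : qn1 1 = 1 := by
  have := q_ne
  have := q2_ne
  rw [qn1_eq]; field_simp
lemma qn2_one : qn2 1 = 1 := by
  have := q_ne
  have := q4_ne
  rw [qn2_eq]; field_simp
lemma qn1_two : qn1 2 = (q ^ 2 + 1) / q := by
  have := q_ne
  have := q2_ne
  rw [qn1_eq]; field_simp; ring
lemma qn1_two_ne : qn1 2 ≠ 0 := by
  rw [qn1_two]; exact div_ne_zero q2p_ne q_ne
lemma qn1_three : qn1 3 = q ^ 2 + 1 + (q ^ 2)⁻¹ := by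
  have := q_ne
  have := q2_ne
  rw [qn1_eq]; field_simp; ring
lemma qn2_two : qn2 2 = q ^ 2 + (q ^ 2)⁻¹ := by
  have := q_ne
  have := q4_ne
  rw [qn2_eq]; field_simp; ring

lemma qn1_succ (m : ℕ) : qn1 (m + 1) = q * qn1 m + (q ^ m)⁻¹ := by
  have := q_ne
  have := q2_ne
  rw [qn1_eq, qn1_eq]; field_simp; ring
lemma qn1_succ' (m : ℕ) : qn1 (m + 1) = q⁻¹ * qn1 m + q ^ m := by
  have := q_ne
  have := q2_ne
  rw [qn1_eq, qn1_eq]; field_simp; ring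
lemma qn2_succ (m : ℕ) : qn2 (m + 1) = (q ^ 2)⁻¹ * qn2 m + (q ^ 2) ^ m := by
  have := q_ne
  have := q4_ne
  rw [qn2_eq, qn2_eq]; field_simp; ring

/-- The coefficient in `b₃ e₂ = e₂ b₃ + kk b₂²`. -/
def kk : K := ((q ^ 2)⁻¹ - 1) * (qn1 2)⁻¹

lemma rel1_U : e1 ^ 3 * e2 - qn1 3 • (e1 ^ 2 * e2 * e1) + qn1 3 • (e1 * e2 * e1 ^ 2)
    - e2 * e1 ^ 3 = 0 := by
  have := RingQuot.mkAlgHom_rel K SerreC2.rel1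
  simpa only [map_sub, map_add, map_mul, map_pow, map_smul, map_zero, e1, e2] using this

lemma rel2_U : e2 ^ 2 * e1 - qn2 2 • (e2 * e1 * e2) + e1 * e2 ^ 2 = 0 := by
  have := RingQuot.mkAlgHom_rel K SerreC2.rel2
  simpa only [map_sub, map_add, map_mul, map_pow, map_smul, map_zero, e1, e2] using this

lemma h12 : e1 * e2 = b2 + q ^ 2 • (e2 * e1) := by unfold b2; abel

lemma hb2e2 : b2 * e2 = (q ^ 2)⁻¹ • (e2 * b2) := by
  have h := rel2_U
  have hq := q_ne
  rw [qn2_two] at h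
  rw [← sub_eq_zero, ← h]
  unfold b2
  simp only [sub_mul, mul_sub, smul_mul_assoc, mul_smul_comm, pow_succ, pow_zero, one_mul, mul_assoc]
  match_scalars <;> field_simp <;> ring

lemma hb2 : e1 * b2 = b2 * e1 + qn1 2 • b3 := by
  unfold b3
  rw [smul_smul, mul_inv_cancel₀ qn1_two_ne, one_smul]; abel

lemma hb3 : e1 * b3 = (q ^ 2)⁻¹ • (b3 * e1) := by
  have h := rel1_U
  have hq := q_ne
  rw [qn1_three] at h
  rw [← sub_eq_zero]
  have h2 : e1 * b3 - (q ^ 2)⁻¹ • (b3 * e1) = (qn1 2)⁻¹ • (0 : UC2) := by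
    rw [← h]
    unfold b3 b2
    simp only [sub_mul, mul_sub, smul_mul_assoc, mul_smul_comm, pow_succ, pow_zero, one_mul,
      mul_assoc]
    match_scalars <;> field_simp <;> ring
  rw [h2, smul_zero]

lemma hb3e1 : b3 * e1 = q ^ 2 • (e1 * b3) := by
  rw [hb3, smul_smul, mul_inv_cancel₀ (pow_ne_zero _ q_ne), one_smul]

lemma hb3e2 : b3 * e2 = e2 * b3 + kk • (b2 * b2) := by
  have hq := q_ne
  have h2 := qn1_two_ne
  have h : qn1 2 • (b3 * e2) = qn1 2 • (e2 * b3) + ((q ^ 2)⁻¹ - 1) • (b2 * b2) := by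
    have e : qn1 2 • b3 = e1 * b2 - b2 * e1 := by rw [hb2]; abel
    rw [← smul_mul_assoc, ← mul_smul_comm, e, sub_mul, mul_assoc, hb2e2, mul_assoc, h12,
      mul_smul_comm, ← mul_assoc, h12]
    simp only [add_mul, mul_add, mul_sub, smul_mul_assoc, mul_smul_comm]
    rw [← mul_assoc b2 e2, hb2e2]
    simp only [smul_mul_assoc, mul_assoc]
    match_scalars <;> field_simp <;> ring
  have h3 := congrArg (fun t => (qn1 2)⁻¹ • t) h
  simp only [smul_add, smul_smul, inv_mul_cancel₀ h2, one_smul] at h3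
  rw [h3, kk, mul_comm]

lemma hb32 : b3 * b2 = (q ^ 2)⁻¹ • (b2 * b3) := by
  have hq := q_ne
  have h2 := qn1_two_ne
  have key : b3 * b2 = q ^ 2 • (b2 * b3) + (q ^ 2 * (kk * qn1 2)) • (b3 * b2 + b2 * b3) := by
    have s1 : b3 * b2 = q ^ 2 • (e1 * (b3 * e2)) - q ^ 2 • (b3 * e2 * e1) := by
      conv_lhs => rw [b2, mul_sub, ← mul_assoc, hb3e1]
      simp only [mul_smul_comm, smul_mul_assoc, mul_assoc]
    have s2 : e1 * (b2 * b2) = b2 * b2 * e1 + qn1 2 • (b3 * b2 + b2 * b3) := by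
      rw [← mul_assoc, hb2, add_mul, mul_assoc, hb2]
      simp only [mul_add, mul_smul_comm, smul_mul_assoc, mul_assoc, smul_add]
      abel
    have s3 : e1 * (e2 * b3) = b2 * b3 + e2 * b3 * e1 := by
      rw [← mul_assoc, h12, mul_assoc e2 b3, hb3e1]
      simp only [add_mul, mul_smul_comm, smul_mul_assoc, mul_assoc]
    have s4 : b3 * b2 = q ^ 2 • (b2 * b3 + e2 * b3 * e1
        + kk • (b2 * b2 * e1 + qn1 2 • (b3 * b2 + b2 * b3)))
        - q ^ 2 • (e2 * b3 * e1 + kk • (b2 * b2 * e1)) := by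
      rw [← s2, ← s3, ← smul_mul_assoc kk (b2 * b2) e1, ← mul_smul_comm kk e1, ← add_mul, ← mul_add, ← hb3e2]
      exact s1
    refine s4.trans ?_
    module
  have e : kk * qn1 2 = (q ^ 2)⁻¹ - 1 := by
    rw [kk, mul_assoc, inv_mul_cancel₀ h2, mul_one]
  rw [e] at key
  have : q ^ 2 • (b3 * b2) = b2 * b3 := by
    have := sub_eq_zero.2 key
    rw [← sub_eq_zero, ← this]
    match_scalars <;> field_simp <;> ring
  rw [← this, smul_smul, inv_mul_cancel₀ (pow_ne_zero _ hq), one_smul]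

lemma comm_pow {x y : UC2} {s : K} (h : x * y = s • (y * x)) (n : ℕ) :
    x ^ n * y = s ^ n • (y * x ^ n) := by
  induction n with
  | zero => simp
  | succ n ih =>
    rw [pow_succ, mul_assoc, h, mul_smul_comm, ← mul_assoc, ih, smul_mul_assoc, smul_smul,
      mul_assoc, pow_succ' s]

lemma comm_pow' {x y : UC2} {s : K} (h : x * y = s • (y * x)) (n : ℕ) :
    x * y ^ n = s ^ n • (y ^ n * x) := by
  induction n with
  | zero => simp
  | succ n ih =>
    rw [pow_succ, ← mul_assoc, ih, smul_mul_assoc, mul_assoc, h, mul_smul_comm, smul_smul,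
      mul_assoc, pow_succ s]

lemma e1_e2pow (a : ℕ) : e1 * e2 ^ a = (q ^ 2) ^ a • (e2 ^ a * e1) + qn2 a • (e2 ^ (a - 1) * b2) := by
  rcases a with _ | a
  · simp [qn2_zero]
  induction a with
  | zero => simp [qn2_one, h12, add_comm]
  | succ a ih =>
    rw [pow_succ e2 (a + 1), ← mul_assoc, ih, add_mul, smul_mul_assoc, smul_mul_assoc, mul_assoc,
      mul_assoc, h12, hb2e2, qn2_succ (a + 1)]
    simp only [mul_add, mul_smul_comm, smul_mul_assoc, Nat.add_sub_cancel, ← mul_assoc, ← pow_succ]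
    module

lemma e1_b2pow (b : ℕ) : e1 * b2 ^ b
    = b2 ^ b * e1 + (qn1 2 * qn1 b * (q ^ (b - 1))⁻¹) • (b2 ^ (b - 1) * b3) := by
  have hq := q_ne
  rcases b with _ | b
  · simp [qn1_zero]
  induction b with
  | zero => simp [qn1_one, hb2]
  | succ b ih =>
    rw [pow_succ b2 (b + 1), ← mul_assoc, ih, add_mul, smul_mul_assoc, mul_assoc _ e1 b2,
      mul_assoc _ b3 b2, hb2, hb32, qn1_succ' (b + 1)]
    simp only [mul_add, mul_smul_comm, smul_mul_assoc, Nat.add_sub_cancel, ← mul_assoc, ← pow_succ]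
    match_scalars <;> field_simp <;> ring

lemma b3pow_e2 (c : ℕ) : b3 ^ c * e2
    = e2 * b3 ^ c + (kk * qn2 c * (q ^ 2)⁻¹ ^ (c - 1)) • (b2 ^ 2 * b3 ^ (c - 1)) := by
  have hq := q_ne
  rcases c with _ | c
  · simp [qn2_zero]
  induction c with
  | zero => simp [qn2_one, hb3e2, pow_two]
  | succ c ih =>
    rw [pow_succ' b3 (c + 1), mul_assoc, ih, mul_add, mul_smul_comm, ← mul_assoc,
      ← mul_assoc, hb3e2, comm_pow' hb32 2, qn2_succ (c + 1)]
    simp only [add_mul, smul_mul_assoc, Nat.add_sub_cancel, mul_assoc, ← pow_succ', ← pow_two]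
    simp only [pow_two b2, mul_assoc, inv_pow]
    match_scalars <;> field_simp <;> ring

lemma e1pow_e2 (d : ℕ) : e1 ^ d * e2
    = (q ^ 2) ^ d • (e2 * e1 ^ d) + (qn1 d * q ^ (d - 1)) • (b2 * e1 ^ (d - 1))
      + (qn1 (d - 1) * qn1 d) • (b3 * e1 ^ (d - 2)) := by
  have hq := q_ne
  have hq2 := q2_ne
  rcases d with _ | _ | d
  · simp [qn1_zero]
  · simp [qn1_zero, qn1_one, h12, add_comm]
  induction d with
  | zero =>
    simp [qn1_one]
    rw [pow_two, mul_assoc, h12, mul_add, hb2, mul_smul_comm, ← mul_assoc, h12]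
    simp only [add_mul, smul_mul_assoc, mul_assoc, qn1_two, pow_two e1]
    match_scalars <;> field_simp <;> ring
  | succ d ih =>
    rw [pow_succ' e1 (d + 1 + 1), mul_assoc, ih, mul_add, mul_add, mul_smul_comm, mul_smul_comm,
      mul_smul_comm, ← mul_assoc, ← mul_assoc, ← mul_assoc, h12, hb2, hb3]
    simp only [add_mul, smul_mul_assoc, Nat.add_sub_cancel, mul_assoc, ← pow_succ',
      show d + 1 + 1 - 2 = d from rfl, show d + 1 + 1 + 1 - 2 = d + 1 from rfl]
    match_scalars <;> (try simp only [qn1_eq]) <;> field_simp <;> ring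

/-- multiplication of PBW monomials of `U_q⁺(C₂)` by the generators.
(Terms with a negative index appear with vanishing coefficient, so truncated
subtraction on `ℕ` realizes the stated convention.) -/
theorem statement13 (a b c d : ℕ) :
    Bmon a b c d * e1 = Bmon a b c (d + 1) ∧
    Bmon a b c d * e2
      = (qn1 d * q ^ ((d : ℤ) - 2 * c - 1)) • Bmon a (b + 1) c (d - 1)
        + (q ^ (2 * ((d : ℤ) - b))) • Bmon (a + 1) b c d
        - (qbra 1 * q ^ (2 * (d : ℤ) - 2 * c + 1) * qn2 c * (qn1 2)⁻¹) • Bmon a (b + 2) (c - 1) d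
        + (qn1 (d - 1) * qn1 d) • Bmon a b (c + 1) (d - 2) ∧
    e1 * Bmon a b c d
      = (qn1 2 * qn1 b * q ^ (2 * (a : ℤ) - b + 1)) • Bmon a (b - 1) (c + 1) d
        + (q ^ (2 * (a : ℤ) - 2 * c)) • Bmon a b c (d + 1)
        + qn2 a • Bmon (a - 1) (b + 1) c d ∧
    e2 * Bmon a b c d = Bmon (a + 1) b c d := by
  have hq := q_ne
  have hz2 : ∀ n : ℕ, (q ^ 2) ^ n = q ^ (2 * (n : ℤ)) := fun n => by
    rw [← pow_mul, ← zpow_natCast]; push_cast; rfl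
  have hzi : ∀ n : ℕ, (q ^ 2)⁻¹ ^ n = q ^ (-(2 * (n : ℤ))) := fun n => by
    rw [inv_pow, hz2, zpow_neg]
  unfold Bmon b1 b4
  refine ⟨by rw [mul_assoc, ← pow_succ], ?_, ?_, by simp only [← mul_assoc, ← pow_succ']⟩
  · have h1 : e2 ^ a * b2 ^ b * b3 ^ c * e1 ^ d * e2
        = (q ^ 2) ^ d • (e2 ^ a * b2 ^ b * (b3 ^ c * e2) * e1 ^ d)
          + (qn1 d * q ^ (d - 1)) • (e2 ^ a * b2 ^ b * (b3 ^ c * b2) * e1 ^ (d - 1))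
          + (qn1 (d - 1) * qn1 d) • (e2 ^ a * b2 ^ b * b3 ^ (c + 1) * e1 ^ (d - 2)) := by
      rw [mul_assoc, e1pow_e2]
      simp only [mul_add, mul_smul_comm, mul_assoc, pow_succ b3]
    have h2 : e2 ^ a * b2 ^ b * (b3 ^ c * e2) * e1 ^ d
        = (q ^ 2)⁻¹ ^ b • (e2 ^ (a + 1) * b2 ^ b * b3 ^ c * e1 ^ d)
          + (kk * qn2 c * (q ^ 2)⁻¹ ^ (c - 1)) •
            (e2 ^ a * b2 ^ (b + 2) * b3 ^ (c - 1) * e1 ^ d) := by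
      rw [b3pow_e2, mul_add, add_mul, ← mul_assoc, mul_assoc (e2 ^ a) (b2 ^ b) e2,
        comm_pow hb2e2 b]
      simp only [mul_smul_comm, smul_mul_assoc, mul_assoc, pow_succ e2, pow_add b2]
    have h3 : e2 ^ a * b2 ^ b * (b3 ^ c * b2) * e1 ^ (d - 1)
        = (q ^ 2)⁻¹ ^ c • (e2 ^ a * b2 ^ (b + 1) * b3 ^ c * e1 ^ (d - 1)) := by
      rw [comm_pow hb32 c]
      simp only [mul_smul_comm, smul_mul_assoc, mul_assoc, pow_succ b2]
    have c1 : qn1 d * q ^ ((d : ℤ) - 2 * c - 1) = qn1 d * q ^ (d - 1) * (q ^ 2)⁻¹ ^ c := by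
      rcases d with _ | d
      · simp [qn1_zero]
      · rw [hzi, mul_assoc, Nat.add_sub_cancel, ← zpow_natCast q d, ← zpow_add₀ hq]
        congr 2; push_cast; ring
    have c2 : q ^ (2 * ((d : ℤ) - b)) = (q ^ 2) ^ d * (q ^ 2)⁻¹ ^ b := by
      rw [hz2, hzi, ← zpow_add₀ hq]; congr 1; ring
    have c3 : qbra 1 * q ^ (2 * (d : ℤ) - 2 * c + 1) * qn2 c * (qn1 2)⁻¹
        = - ((q ^ 2) ^ d * (kk * qn2 c * (q ^ 2)⁻¹ ^ (c - 1))) := by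
      rcases c with _ | c
      · simp [qn2_zero]
      · have e : q ^ (2 * (d : ℤ) - 2 * ((c + 1 : ℕ) : ℤ) + 1)
            = (q ^ 2) ^ d * (q ^ 2)⁻¹ ^ c * q⁻¹ := by
          rw [hz2, hzi, ← zpow_neg_one, ← zpow_add₀ hq, ← zpow_add₀ hq]
          congr 1; push_cast; ring
        have e2 : qbra 1 * q⁻¹ = -((q ^ 2)⁻¹ - 1) := by
          unfold qbra; field_simp; ring
        rw [e, kk, Nat.add_sub_cancel]
        linear_combination ((q ^ 2) ^ d * (q ^ 2)⁻¹ ^ c * qn2 (c + 1) * (qn1 2)⁻¹) * e2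
    rw [h1, h2, h3, c1, c2, c3]
    module
  · have h1 : e1 * (e2 ^ a * b2 ^ b * b3 ^ c * e1 ^ d)
        = (q ^ 2) ^ a • (e2 ^ a * (e1 * b2 ^ b) * b3 ^ c * e1 ^ d)
          + qn2 a • (e2 ^ (a - 1) * b2 ^ (b + 1) * b3 ^ c * e1 ^ d) := by
      simp only [← mul_assoc, e1_e2pow]
      simp only [add_mul, smul_mul_assoc, mul_assoc, pow_succ' b2]
    have h2 : e2 ^ a * (e1 * b2 ^ b) * b3 ^ c * e1 ^ d
        = (q ^ 2)⁻¹ ^ c • (e2 ^ a * b2 ^ b * b3 ^ c * e1 ^ (d + 1))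
          + (qn1 2 * qn1 b * (q ^ (b - 1))⁻¹) •
            (e2 ^ a * b2 ^ (b - 1) * b3 ^ (c + 1) * e1 ^ d) := by
      rw [e1_b2pow, mul_add, add_mul, add_mul, ← mul_assoc, mul_assoc (e2 ^ a * b2 ^ b) e1,
        comm_pow' hb3 c]
      simp only [mul_smul_comm, smul_mul_assoc, mul_assoc, pow_succ' b3, pow_succ' e1]
    have c1 : qn1 2 * qn1 b * q ^ (2 * (a : ℤ) - b + 1)
        = (q ^ 2) ^ a * (qn1 2 * qn1 b * (q ^ (b - 1))⁻¹) := by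
      rcases b with _ | b
      · simp [qn1_zero]
      · have e : q ^ (2 * (a : ℤ) - ((b + 1 : ℕ) : ℤ) + 1) = (q ^ 2) ^ a * (q ^ b)⁻¹ := by
          rw [hz2, ← zpow_natCast q b, ← zpow_neg, ← zpow_add₀ hq]
          congr 1; push_cast; ring
        rw [e, Nat.add_sub_cancel]; ring
    have c2 : q ^ (2 * (a : ℤ) - 2 * c) = (q ^ 2) ^ a * (q ^ 2)⁻¹ ^ c := by
      rw [hz2, hzi, ← zpow_add₀ hq]; congr 1
    rw [h1, h2, c1, c2]
    module
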